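/- In the braid group B_n, for every k with 2 ≤ k ≤ n, the element U_k commutes with σ_i for all 1 ≤ i ≤ k−2. -/

import Mathlib

/-- The braid relations on `m` generators (so that `σ_1, …, σ_m` present the braid
group `B_{m+1}`); generator `i : Fin m` corresponds to `σ_{i+1}`. -/
def braidRels (m : ℕ) : Set (FreeGroup (Fin m)) :=
  {r | ∃ i j : Fin m, (i.val + 2 ≤ j.val ∨ j.val + 2 ≤ i.val) ∧
        r = FreeGroup.of i * FreeGroup.of j * (FreeGroup.of i)⁻¹ * (FreeGroup.of j)⁻¹}
  ∪ {r | ∃ i j : Fin m, (i.val + 1 = j.val ∨ j.val + 1 = i.val) ∧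
        r = FreeGroup.of i * FreeGroup.of j * FreeGroup.of i *
            (FreeGroup.of j * FreeGroup.of i * FreeGroup.of j)⁻¹}

/-- The braid group `B n` on `n` strands, presented with generators `σ_1, …, σ_{n-1}`. -/
abbrev BraidGroup (n : ℕ) : Type := PresentedGroup (braidRels (n - 1))

namespace BraidGroup

/-- The Artin generator `σ_i` of `B n` for `1 ≤ i ≤ n - 1` (junk value `1` otherwise). -/
def σ (n i : ℕ) : BraidGroup n :=
  if h : 1 ≤ i ∧ i ≤ n - 1 then PresentedGroup.of (⟨i - 1, by omega⟩ : Fin (n - 1)) else 1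

/-- `D n k = σ_{k-1} ⋯ σ_2 σ_1` in `B n`; `D n 1 = 1`. -/
def D (n k : ℕ) : BraidGroup n :=
  (((List.range (k - 1)).reverse).map (fun j => σ n (j + 1))).prod

/-- `E n k = σ_1 σ_2 ⋯ σ_{k-1}` in `B n`; `E n 1 = 1`. -/
def E (n k : ℕ) : BraidGroup n :=
  ((List.range (k - 1)).map (fun j => σ n (j + 1))).prod

/-- `U n k = D n k * E n k` in `B n`; `U n 1 = 1`. -/
def U (n k : ℕ) : BraidGroup n := D n k * E n k

/-- `δ = σ_{n-1} σ_{n-2} ⋯ σ_1` in `B n`. -/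
def delta (n : ℕ) : BraidGroup n := D n n

/-- `Δ = σ_1 (σ_2 σ_1) ⋯ (σ_{n-1} ⋯ σ_1) = D_2 D_3 ⋯ D_n` in `B n`. -/
def Delta (n : ℕ) : BraidGroup n :=
  ((List.range (n - 1)).map (fun j => D n (j + 2))).prod

end BraidGroup

namespace BraidGroup

theorem σ_comm {n i j : ℕ} (hi : 1 ≤ i) (hij : i + 2 ≤ j) (hj : j ≤ n - 1) :
    σ n i * σ n j = σ n j * σ n i := by
  rw [σ, σ, dif_pos ⟨hi, by omega⟩, dif_pos ⟨by omega, hj⟩]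
  have h := PresentedGroup.one_of_mem (rels := braidRels (n - 1))
    (Or.inl ⟨⟨i - 1, by omega⟩, ⟨j - 1, by omega⟩, Or.inl (by simp only; omega), rfl⟩)
  simp only [map_mul, map_inv] at h
  exact mul_inv_eq_iff_eq_mul.mp (mul_inv_eq_one.mp h)

theorem σ_braid {n i : ℕ} (hi : 1 ≤ i) (hin : i + 1 ≤ n - 1) :
    σ n i * σ n (i + 1) * σ n i = σ n (i + 1) * σ n i * σ n (i + 1) := by
  rw [σ, σ, dif_pos ⟨hi, by omega⟩, dif_pos ⟨by omega, hin⟩]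
  have h := PresentedGroup.one_of_mem (rels := braidRels (n - 1))
    (Or.inr ⟨⟨i - 1, by omega⟩, ⟨i + 1 - 1, by omega⟩, Or.inl (by simp only; omega), rfl⟩)
  simp only [map_mul, map_inv] at h
  exact mul_inv_eq_one.mp h

theorem D_one (n : ℕ) : D n 1 = 1 := by simp [D]

theorem E_one (n : ℕ) : E n 1 = 1 := by simp [E]

theorem D_succ (n : ℕ) {k : ℕ} (hk : 1 ≤ k) : D n (k + 1) = σ n k * D n k := by
  obtain ⟨m, rfl⟩ := Nat.exists_eq_add_of_le' hk
  simp [D, List.range_succ]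

theorem E_succ (n : ℕ) {k : ℕ} (hk : 1 ≤ k) : E n (k + 1) = E n k * σ n k := by
  obtain ⟨m, rfl⟩ := Nat.exists_eq_add_of_le' hk
  simp [E, List.range_succ]

theorem D_mul_σ_comm {n k j : ℕ} (hk : 1 ≤ k) (hkj : k + 1 ≤ j) (hj : j ≤ n - 1) :
    D n k * σ n j = σ n j * D n k := by
  induction k, hk using Nat.le_induction with
  | base => simp [D_one]
  | succ k hk ih =>
    rw [D_succ n hk, mul_assoc, ih (by omega), ← mul_assoc, σ_comm hk hkj hj, mul_assoc]

theorem E_mul_σ_comm {n k j : ℕ} (hk : 1 ≤ k) (hkj : k + 1 ≤ j) (hj : j ≤ n - 1) :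
    E n k * σ n j = σ n j * E n k := by
  induction k, hk using Nat.le_induction with
  | base => simp [E_one]
  | succ k hk ih =>
    rw [E_succ n hk, mul_assoc, σ_comm hk hkj hj, ← mul_assoc, ih (by omega), mul_assoc]

/-- Conjugation by `E_k` shifts `σ_i` to `σ_{i+1}`. -/
theorem E_mul_σ {n k i : ℕ} (hi : 1 ≤ i) (hik : i + 2 ≤ k) (hkn : k ≤ n) :
    E n k * σ n i = σ n (i + 1) * E n k := by
  induction k, hik using Nat.le_induction with
  | base =>
    rw [E_succ n (by omega : 1 ≤ i + 1), E_succ n hi, mul_assoc, mul_assoc,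
      ← mul_assoc (σ n i), σ_braid hi (by omega), mul_assoc, ← mul_assoc (E n i),
      E_mul_σ_comm hi le_rfl (by omega)]
    simp only [mul_assoc]
  | succ k hik ih =>
    rw [E_succ n (by omega), mul_assoc, ← σ_comm hi hik (by omega), ← mul_assoc,
      ih (by omega), mul_assoc]

/-- Conjugation by `D_k` shifts `σ_{i+1}` to `σ_i`. -/
theorem D_mul_σ_succ {n k i : ℕ} (hi : 1 ≤ i) (hik : i + 2 ≤ k) (hkn : k ≤ n) :
    D n k * σ n (i + 1) = σ n i * D n k := by
  induction k, hik using Nat.le_induction with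
  | base =>
    rw [D_succ n (by omega : 1 ≤ i + 1), D_succ n hi, mul_assoc, mul_assoc,
      D_mul_σ_comm hi le_rfl (by omega)]
    simp only [← mul_assoc]
    rw [σ_braid hi (by omega)]
  | succ k hik ih =>
    rw [D_succ n (by omega), mul_assoc, ih (by omega), ← mul_assoc,
      ← σ_comm hi hik (by omega), mul_assoc]

end BraidGroup

/-- **Lemma (DEU (ii)).** In `B n`, for `2 ≤ k ≤ n`, the element `U_k` commutes with
`σ_i` for all `1 ≤ i ≤ k - 2`. -/
theorem U_sigma_comm (n k : ℕ) (hk2 : 2 ≤ k) (hkn : k ≤ n)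
    (i : ℕ) (hi1 : 1 ≤ i) (hi : i ≤ k - 2) :
    BraidGroup.U n k * BraidGroup.σ n i = BraidGroup.σ n i * BraidGroup.U n k := by
  rw [BraidGroup.U, mul_assoc, BraidGroup.E_mul_σ hi1 (by omega) hkn, ← mul_assoc,
    BraidGroup.D_mul_σ_succ hi1 (by omega) hkn, mul_assoc]
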